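/- Suppose all entries of C lie in [0, d2] and 0 ≤ s^(t) ≤ S componentwise for all t. Let (v^(t)) be decision vectors, let N' ≤ N be slot indices and l* a BS index such that: v_{l*}^(t) = 0 for all N' < t ≤ N+1 (BS l* is never active after slot N'), e_{l*}^(N') ≥ e_m^(N') for all 1 ≤ m ≤ M (l* has the highest available energy at slot N'), and e_{l*}^(N+1) < 0. Then e_m^(N+1) < τ·(d2 + S)·(N + 1 − N') for every 1 ≤ m ≤ M. -/

import Mathlib

open Matrix Finset

/-- Available energy of base station `m` at the end of slot `n`:
`e^(n) = e0·u + τ·Σ_{t=1}^n s^(t) − τ·C·Σ_{t=1}^n v^(t)`. -/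
noncomputable def energyVec {M : ℕ} (τ : ℝ) (C : Matrix (Fin M) (Fin M) ℝ)
    (e0 : ℝ) (s v : ℕ → Fin M → ℝ) (n : ℕ) (m : Fin M) : ℝ :=
  e0 + τ * (∑ t ∈ Finset.Icc 1 n, s t m)
    - τ * C.mulVec (∑ t ∈ Finset.Icc 1 n, v t) m

/-- A decision vector: entries in `{0,1}` with exactly one `1` (i.e. `uᵀv = 1`). -/
def IsDecision {M : ℕ} (v : Fin M → ℝ) : Prop :=
  (∀ m, v m = 0 ∨ v m = 1) ∧ (∑ m, v m) = 1

theorem mulVec_apply_mem_of_mem_stdSimplex {𝕜 ι κ : Type*} [Field 𝕜] [LinearOrder 𝕜]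
    [IsStrictOrderedRing 𝕜] [Fintype κ] {A : Matrix ι κ 𝕜} {w : κ → 𝕜} {K : Set 𝕜} {i : ι}
    (hK : Convex 𝕜 K) (hw : w ∈ stdSimplex 𝕜 κ) (hA : ∀ j, A i j ∈ K) : (A *ᵥ w) i ∈ K := by
  have hsum := hK.sum_mem (fun j _ ↦ hw.1 j) hw.2 fun j _ ↦ hA j
  simpa only [mulVec, dotProduct, smul_eq_mul, mul_comm] using hsum

theorem IsDecision.mem_stdSimplex {M : ℕ} {w : Fin M → ℝ} (hw : IsDecision w) :
    w ∈ stdSimplex ℝ (Fin M) :=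
  ⟨fun m ↦ (hw.1 m).elim (fun h ↦ h.ge) fun h ↦ h ▸ zero_le_one, hw.2⟩

section EnergyChange

variable {M : ℕ} {τ : ℝ} {C : Matrix (Fin M) (Fin M) ℝ} {e0 : ℝ} {s v : ℕ → Fin M → ℝ}
  {n₀ n : ℕ} {m : Fin M}

theorem energyVec_sub_energyVec (hn : n₀ ≤ n) :
    energyVec τ C e0 s v n m - energyVec τ C e0 s v n₀ m =
      τ * ∑ t ∈ Ioc n₀ n, (s t m - (C *ᵥ v t) m) := by
  have hrecharge := sum_Ioc_consecutive (fun t ↦ s t m) n₀.zero_le hn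
  have hconsumption := sum_Ioc_consecutive (fun t ↦ (C *ᵥ v t) m) n₀.zero_le hn
  have hIcc (k : ℕ) : Icc 1 k = Ioc 0 k := rfl
  simp only [energyVec, hIcc, mulVec_sum, Finset.sum_apply, sum_sub_distrib, ← hrecharge,
    ← hconsumption]
  ring

theorem energyVec_le_add {S : ℝ} (hτ : 0 ≤ τ) (hn : n₀ ≤ n) (hC : ∀ j, 0 ≤ C m j)
    (hs : ∀ t ∈ Ioc n₀ n, s t m ≤ S) (hv : ∀ t ∈ Ioc n₀ n, v t ∈ stdSimplex ℝ (Fin M)) :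
    energyVec τ C e0 s v n m ≤ energyVec τ C e0 s v n₀ m + τ * (S * (n - n₀)) := by
  have hrate : ∀ t ∈ Ioc n₀ n, s t m - (C *ᵥ v t) m ≤ S := fun t ht ↦
    (sub_le_self _ (mulVec_apply_mem_of_mem_stdSimplex (convex_Ici 0) (hv t ht) hC)).trans
      (hs t ht)
  have hsum : ∑ t ∈ Ioc n₀ n, (s t m - (C *ᵥ v t) m) ≤ S * (n - n₀) := by
    simpa [Nat.cast_sub hn, mul_comm] using sum_le_card_nsmul _ _ S hrate
  rw [← sub_le_iff_le_add', energyVec_sub_energyVec hn]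
  exact mul_le_mul_of_nonneg_left hsum hτ

theorem energyVec_sub_le {d : ℝ} (hτ : 0 ≤ τ) (hn : n₀ ≤ n) (hC : ∀ j, C m j ≤ d)
    (hs : ∀ t ∈ Ioc n₀ n, 0 ≤ s t m) (hv : ∀ t ∈ Ioc n₀ n, v t ∈ stdSimplex ℝ (Fin M)) :
    energyVec τ C e0 s v n₀ m - τ * (d * (n - n₀)) ≤ energyVec τ C e0 s v n m := by
  have hrate : ∀ t ∈ Ioc n₀ n, -d ≤ s t m - (C *ᵥ v t) m := fun t ht ↦ by
    have hconsumption : (C *ᵥ v t) m ≤ d :=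
      mulVec_apply_mem_of_mem_stdSimplex (convex_Iic d) (hv t ht) hC
    linarith [hs t ht]
  have hsum : -(d * (n - n₀)) ≤ ∑ t ∈ Ioc n₀ n, (s t m - (C *ᵥ v t) m) := by
    simpa [Nat.cast_sub hn, mul_comm] using card_nsmul_le_sum _ _ (-d) hrate
  rw [sub_eq_add_neg, ← le_sub_iff_add_le', energyVec_sub_energyVec hn, ← mul_neg]
  exact mul_le_mul_of_nonneg_left hsum hτ

theorem all_energies_small_at_death_general {d S : ℝ} {l : Fin M} (hτ : 0 ≤ τ) (hn : n₀ ≤ n)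
    (hCm : ∀ j, 0 ≤ C m j) (hCl : ∀ j, C l j ≤ d)
    (hsm : ∀ t ∈ Ioc n₀ n, s t m ≤ S) (hsl : ∀ t ∈ Ioc n₀ n, 0 ≤ s t l)
    (hv : ∀ t ∈ Ioc n₀ n, v t ∈ stdSimplex ℝ (Fin M))
    (hhigh : energyVec τ C e0 s v n₀ m ≤ energyVec τ C e0 s v n₀ l)
    (hdead : energyVec τ C e0 s v n l < 0) :
    energyVec τ C e0 s v n m < τ * (d + S) * (n - n₀) :=
  calc
    energyVec τ C e0 s v n m
      ≤ energyVec τ C e0 s v n₀ m + τ * (S * (n - n₀)) := energyVec_le_add hτ hn hCm hsm hv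
    _ ≤ energyVec τ C e0 s v n₀ l + τ * (S * (n - n₀)) := by gcongr
    _ ≤ energyVec τ C e0 s v n l + τ * (d + S) * (n - n₀) := by
      linarith [energyVec_sub_le (e0 := e0) hτ hn hCl hsl hv]
    _ < τ * (d + S) * (n - n₀) := add_lt_of_neg_left _ hdead

end EnergyChange

/-- Under the HEF rule, if the station `l` that dies at slot `N+1` was last active at slot
`N'` (where it had the highest energy), then at slot `N+1` every station has available
energy below `τ·(d2 + S)·(N + 1 − N')`. -/
theorem all_energies_small_at_death
    {M : ℕ} (hM : 2 ≤ M)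
    (τ : ℝ) (hτ : 0 < τ)
    (C : Matrix (Fin M) (Fin M) ℝ)
    (d2 S : ℝ) (hd2 : 0 < d2) (hS : 0 < S)
    (hC : ∀ i j, 0 ≤ C i j ∧ C i j ≤ d2)
    (s : ℕ → Fin M → ℝ) (hs : ∀ t m, 0 ≤ s t m ∧ s t m ≤ S)
    (v : ℕ → Fin M → ℝ) (hvdec : ∀ t, IsDecision (v t))
    (e0 : ℝ) (he0 : 0 < e0)
    (N' N : ℕ) (hNN : N' ≤ N) (l : Fin M)
    -- `l` is never active after slot `N'`
    (hnotact : ∀ t, N' < t → t ≤ N + 1 → v t l = 0)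
    -- `l` has the highest available energy at slot `N'`
    (hhigh : ∀ m, energyVec τ C e0 s v N' m ≤ energyVec τ C e0 s v N' l)
    -- `l` is dead at slot `N+1`
    (hdead : energyVec τ C e0 s v (N+1) l < 0) :
    ∀ m, energyVec τ C e0 s v (N+1) m < τ * (d2 + S) * ((N : ℝ) + 1 - N') := by
  intro m
  exact_mod_cast all_energies_small_at_death_general hτ.le (Nat.le_succ_of_le hNN)
    (fun j ↦ (hC m j).1) (fun j ↦ (hC l j).2) (fun t _ ↦ (hs t m).2) (fun t _ ↦ (hs t l).1)
    (fun t _ ↦ (hvdec t).mem_stdSimplex) (hhigh m) hdead
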